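/- For every well-formed formula Q and all well-formed formulas A, B of the implicational propositional calculus, the formula (QA ⊃ B) ⊃ [(QQA ⊃ B) ⊃ QQB] is a theorem of IPC. -/

import Mathlib

/-- Well-formed formulas of the implicational propositional calculus:
propositional variables (indexed by ℕ, so the set of wfs is countable)
and the single connective ⊃. -/
inductive Wf where
  | var : ℕ → Wf
  | imp : Wf → Wf → Wf
deriving DecidableEq

infixr:60 " ⊃' " => Wf.imp

/-- `Deduces Γ A` : `A` is deducible from the set `Γ` of extra axioms/hypotheses,
using the three axiom schemes of IPC (including the Peirce scheme) and modus ponens.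
Theorems of IPC are `Deduces ∅ A`; for an extension `M` of IPC with extra-axiom
set `E`, `T(M)` is `Deduces E`, and deducibility from hypotheses `Γ` in `M` is
`Deduces (E ∪ Γ)`. -/
inductive Deduces : Set Wf → Wf → Prop where
  | hyp : ∀ {Γ : Set Wf} {A : Wf}, A ∈ Γ → Deduces Γ A
  | ax1 : ∀ {Γ : Set Wf} (A B : Wf), Deduces Γ (A ⊃' (B ⊃' A))
  | ax2 : ∀ {Γ : Set Wf} (A B C : Wf),
      Deduces Γ ((A ⊃' (B ⊃' C)) ⊃' ((A ⊃' B) ⊃' (A ⊃' C)))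
  | peirce : ∀ {Γ : Set Wf} (A B : Wf), Deduces Γ (((A ⊃' B) ⊃' A) ⊃' A)
  | mp : ∀ {Γ : Set Wf} {A B : Wf}, Deduces Γ (A ⊃' B) → Deduces Γ A → Deduces Γ B

namespace Deduces

variable {Γ : Set Wf} {A B C : Wf}

theorem imp_self (A : Wf) : Deduces Γ (A ⊃' A) :=
  .mp (.mp (.ax2 A (A ⊃' A) A) (.ax1 A (A ⊃' A))) (.ax1 A A)

theorem imp_const (A : Wf) (hB : Deduces Γ B) : Deduces Γ (A ⊃' B) :=
  .mp (.ax1 B A) hB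

theorem imp_mp (hBC : Deduces Γ (A ⊃' B ⊃' C)) (hB : Deduces Γ (A ⊃' B)) :
    Deduces Γ (A ⊃' C) :=
  .mp (.mp (.ax2 A B C) hBC) hB

theorem imp_trans (hAB : Deduces Γ (A ⊃' B)) (hBC : Deduces Γ (B ⊃' C)) :
    Deduces Γ (A ⊃' C) :=
  imp_mp (imp_const A hBC) hAB

theorem imp_contrapose (C : Wf) (hAB : Deduces Γ (A ⊃' B)) :
    Deduces Γ ((B ⊃' C) ⊃' (A ⊃' C)) :=
  imp_mp (imp_trans (.ax1 (B ⊃' C) A) (.ax2 A B C)) (imp_const (B ⊃' C) hAB)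

theorem deduction_theorem (h : Deduces (insert A Γ) B) : Deduces Γ (A ⊃' B) := by
  induction h with
  | hyp hmem =>
    rcases hmem with rfl | hmem
    · exact imp_self _
    · exact imp_const A (.hyp hmem)
  | ax1 X Y => exact imp_const A (.ax1 X Y)
  | ax2 X Y Z => exact imp_const A (.ax2 X Y Z)
  | peirce X Y => exact imp_const A (.peirce X Y)
  | mp _ _ ihImp ihArg => exact imp_mp ihImp ihArg

/-- Negation is relative to `Q`: the negation of a formula `X` is `X ⊃ Q`. -/
theorem double_neg_of_cases {P Q : Wf} (hPos : Deduces Γ (P ⊃' B))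
    (hNeg : Deduces Γ ((P ⊃' Q) ⊃' B)) : Deduces Γ ((B ⊃' Q) ⊃' Q) := by
  have refute_P : Deduces Γ ((B ⊃' Q) ⊃' (P ⊃' Q)) := imp_contrapose Q hPos
  have derive_B : Deduces Γ ((B ⊃' Q) ⊃' B) := imp_trans refute_P hNeg
  exact imp_mp (imp_self (B ⊃' Q)) derive_B

end Deduces

theorem stmt_7_general (Γ : Set Wf) (P Q B : Wf) :
    Deduces Γ ((P ⊃' B) ⊃' ((P ⊃' Q) ⊃' B) ⊃' (B ⊃' Q) ⊃' Q) := by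
  refine .deduction_theorem (.deduction_theorem (.double_neg_of_cases (P := P) ?pos ?neg))
  case pos => exact .hyp (.inr (.inl rfl))
  case neg => exact .hyp (.inl rfl)

/-- Theorem 1(8): (QA ⊃ B) ⊃ [(QQA ⊃ B) ⊃ QQB] is a theorem of IPC. -/
theorem stmt_7 (Q A B : Wf) :
    Deduces ∅ (((A ⊃' Q) ⊃' B) ⊃'
      (((((A ⊃' Q) ⊃' Q) ⊃' B)) ⊃' ((B ⊃' Q) ⊃' Q))) :=
  stmt_7_general ∅ (A ⊃' Q) Q B
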